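/- For every C > 0 there exists K > 0 such that for all x ∈ ℝ³ with x ≠ 0, ∫_{ℝ³} exp(−‖y‖/C)/‖x − y‖² dy ≤ K/‖x‖². -/

import Mathlib

open MeasureTheory

/-!
By the triangle inequality `‖x‖² ≤ 2‖x - y‖² + 2‖y‖²`, so `‖x‖²` times the integrand is at most
`2 exp(-‖y‖/C) + 2 ‖y‖² exp(-‖y‖/C) / ‖x - y‖²`. In the second term, the kernel `1/‖x - y‖²` is at
most `1` when `‖x - y‖ ≥ 1`, while `‖y‖² exp(-‖y‖/C) ≤ 2C²` handles `‖x - y‖ < 1`. This bounds the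
integrand by a fixed integrable function of `y` plus a translate of the integrable truncated kernel
`1_{‖z‖ < 1}/‖z‖²` (`truncKernel`), and the integral of the latter does not depend on `x`.
-/

/-- The inverse-square kernel on `ℝ³` cut off to the open unit ball. -/
noncomputable def truncKernel (z : EuclideanSpace ℝ (Fin 3)) : ℝ :=
  (Metric.ball 0 1).indicator (fun z => (‖z‖ ^ 2)⁻¹) z

lemma truncKernel_nonneg (z : EuclideanSpace ℝ (Fin 3)) : 0 ≤ truncKernel z :=
  Set.indicator_nonneg (fun _ _ => by positivity) z

lemma integrable_truncKernel : Integrable truncKernel := by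
  have h : IntegrableOn (fun z : EuclideanSpace ℝ (Fin 3) => (‖z‖ ^ 2)⁻¹)
      (Metric.ball 0 1) := by
    refine integrableOn_ball_of_norm_le_rpow (C := 1) (α := 2) (by simp) (by simp; norm_num)
      (.of_forall fun z => ?_) (by fun_prop)
    rw [Real.rpow_neg (norm_nonneg z)]
    simp
  exact h.integrable_indicator measurableSet_ball

lemma integrable_pow_norm_mul_exp {C : ℝ} (hC : 0 < C) (n : ℕ) :
    Integrable (fun y : EuclideanSpace ℝ (Fin 3) => ‖y‖ ^ n * Real.exp (-‖y‖ / C)) := by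
  refine (integrable_fun_norm_addHaar volume
    (f := fun t : ℝ => t ^ n * Real.exp (-t / C))).2 ?_
  have h := integrableOn_rpow_mul_exp_neg_mul_rpow (p := 1) (s := (n + 2 : ℕ)) (b := C⁻¹)
    (by have : (0 : ℝ) ≤ (n + 2 : ℕ) := by positivity
        linarith) one_pos (by positivity)
  refine h.congr_fun (fun t _ => ?_) measurableSet_Ioi
  simp only [Real.rpow_natCast, Real.rpow_one, finrank_euclideanSpace, Fintype.card_fin,
    smul_eq_mul]
  rw [show -C⁻¹ * t = -t / C by ring]
  ring

lemma sq_mul_exp_le {C t : ℝ} (hC : 0 < C) (ht : 0 ≤ t) :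
    t ^ 2 * Real.exp (-t / C) ≤ 2 * C ^ 2 := by
  have h := Real.quadratic_le_exp_of_nonneg (div_nonneg ht hC.le)
  have h0 : 0 ≤ t / C := div_nonneg ht hC.le
  rw [neg_div, Real.exp_neg, ← div_eq_mul_inv, div_le_iff₀ (Real.exp_pos _)]
  have h1 : t ^ 2 = 2 * C ^ 2 * ((t / C) ^ 2 / 2) := by field_simp
  rw [h1]
  gcongr
  linarith

/-- The pointwise bound on `‖x‖²` times the integrand; at `y = x` the left side is the junk
value `0`. -/
lemma norm_sq_mul_integrand_le {C : ℝ} (hC : 0 < C) (x y : EuclideanSpace ℝ (Fin 3)) :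
    ‖x‖ ^ 2 * (Real.exp (-‖y‖ / C) / ‖x - y‖ ^ 2) ≤
      2 * (‖y‖ ^ 0 * Real.exp (-‖y‖ / C)) + 2 * (‖y‖ ^ 2 * Real.exp (-‖y‖ / C)) +
        4 * C ^ 2 * truncKernel (x - y) := by
  have hk := truncKernel_nonneg (x - y)
  rcases (norm_nonneg (x - y)).eq_or_lt with hd | hd
  · rw [← hd]
    simp only [ne_eq, OfNat.ofNat_ne_zero, not_false_eq_true, zero_pow, div_zero, mul_zero]
    positivity
  have hx : ‖x‖ ^ 2 ≤ 2 * ‖x - y‖ ^ 2 + 2 * ‖y‖ ^ 2 := by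
    have h : ‖x‖ ≤ ‖x - y‖ + ‖y‖ := by simpa using norm_add_le (x - y) y
    nlinarith [norm_nonneg x, norm_nonneg y, sq_nonneg (‖x - y‖ - ‖y‖)]
  have hA := sq_mul_exp_le hC (norm_nonneg y)
  have he := Real.exp_pos (-‖y‖ / C)
  set e := Real.exp (-‖y‖ / C)
  have h1 : ‖x‖ ^ 2 * (e / ‖x - y‖ ^ 2) ≤ 2 * e + 2 * (‖y‖ ^ 2 * e * (‖x - y‖ ^ 2)⁻¹) := by
    calc ‖x‖ ^ 2 * (e / ‖x - y‖ ^ 2)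
        ≤ (2 * ‖x - y‖ ^ 2 + 2 * ‖y‖ ^ 2) * (e / ‖x - y‖ ^ 2) := by gcongr
      _ = _ := by field_simp
  have hg : 0 ≤ ‖y‖ ^ 2 * e := by positivity
  have h2 : ‖y‖ ^ 2 * e * (‖x - y‖ ^ 2)⁻¹ ≤ ‖y‖ ^ 2 * e + 2 * C ^ 2 * truncKernel (x - y) := by
    by_cases hlt : ‖x - y‖ < 1
    · have hkv : truncKernel (x - y) = (‖x - y‖ ^ 2)⁻¹ :=
        Set.indicator_of_mem (by simpa using hlt) _
      rw [hkv]
      have : ‖y‖ ^ 2 * e * (‖x - y‖ ^ 2)⁻¹ ≤ 2 * C ^ 2 * (‖x - y‖ ^ 2)⁻¹ := by gcongr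
      linarith
    · have : (‖x - y‖ ^ 2)⁻¹ ≤ 1 := inv_le_one_of_one_le₀ (one_le_pow₀ (not_lt.1 hlt))
      have h3 := mul_le_mul_of_nonneg_left this hg
      have : 0 ≤ 2 * C ^ 2 * truncKernel (x - y) := by positivity
      linarith
  rw [pow_zero, one_mul]
  linarith

/-- For every `C > 0` there is `K > 0` such that
`∫ exp(-‖y‖/C)/‖x - y‖² dy ≤ K/‖x‖²` for all `x ≠ 0` in `ℝ³`. -/
theorem exp_over_dist_sq_integral_bound (C : ℝ) (hC : 0 < C) :
    ∃ K > 0, ∀ x : EuclideanSpace ℝ (Fin 3), x ≠ 0 →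
      (∫ y, Real.exp (-‖y‖ / C) / ‖x - y‖ ^ 2) ≤ K / ‖x‖ ^ 2 := by
  let G : EuclideanSpace ℝ (Fin 3) → ℝ := fun y =>
    2 * (‖y‖ ^ 0 * Real.exp (-‖y‖ / C)) + 2 * (‖y‖ ^ 2 * Real.exp (-‖y‖ / C))
  have hG : Integrable G :=
    ((integrable_pow_norm_mul_exp hC 0).const_mul 2).add
      ((integrable_pow_norm_mul_exp hC 2).const_mul 2)
  have hG0 : 0 ≤ ∫ y, G y := integral_nonneg fun y => by positivity
  have hk0 : 0 ≤ ∫ z, truncKernel z := integral_nonneg truncKernel_nonneg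
  refine ⟨(∫ y, G y) + 4 * C ^ 2 * (∫ z, truncKernel z) + 1, by positivity, fun x hx => ?_⟩
  have hk : Integrable fun y => 4 * C ^ 2 * truncKernel (x - y) :=
    (integrable_truncKernel.comp_sub_left x).const_mul _
  rw [le_div_iff₀' (by positivity), ← integral_const_mul]
  calc ∫ y, ‖x‖ ^ 2 * (Real.exp (-‖y‖ / C) / ‖x - y‖ ^ 2)
      ≤ ∫ y, (G y + 4 * C ^ 2 * truncKernel (x - y)) :=
        integral_mono_of_nonneg (.of_forall fun y => by positivity) (hG.add hk)
          (.of_forall fun y => norm_sq_mul_integrand_le hC x y)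
    _ = (∫ y, G y) + 4 * C ^ 2 * ∫ z, truncKernel z := by
        rw [integral_add hG hk, integral_const_mul, integral_sub_left_eq_self truncKernel]
    _ ≤ _ := by linarith
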